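/- For every integer s ≥ 1, ∑_{j=2}^{2s} (-1)^j W(2s+1-j, 1, j) = ζ(2s+1, 1) + (1/4) ζ(2s+2). -/

import Mathlib

/-!
Put `N = n + m`. For fixed `n, m` the alternating sum over `j` is geometric with ratio `-n / N`, and
since `m (N + n) = N² - n²` it equals `A + B` with
`A = 1 / (n^(2s-1) m N (N + n))` and `B = 1 / (N^(2s) m (N + n))`.
All series involved are dominated by `∑ 1 / (n² m²)`, so sums may be rearranged freely.

* Summing `A` over `m` for fixed `n`, partial fractions and telescoping give
  `n^(-2s-1) (H_n - H_{2n} / 2)` (`hasSum_termA`).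
* Summing `B` over `n < N` for fixed `N` gives `N^(-2s-1) (H_{2N} / 2 - 3 / (4N))` (`sum_termB`).

In the total the terms `H_{2n}` cancel, leaving
`∑ n^(-2s-1) (H_n - 3 / (4n)) = ∑ n^(-2s-1) (H_{n-1} + 1 / (4n))`.

Positive integers are written as `i + 1` with `i : ℕ`, and `2s - 1` as `a + 1` (so `a` is always `2 (s - 1)` in the end).
-/


open scoped BigOperators

/-- Riemann zeta value at a natural number `s ≥ 2`: `ζ(s) = ∑_{n≥1} 1/n^s`. -/
noncomputable def rzeta (s : ℕ) : ℝ := ∑' n : ℕ, 1 / (n : ℝ) ^ s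

/-- Double zeta value `ζ(a,b) = ∑_{n≥1} ∑_{m=1}^{n-1} 1/(n^a m^b)`. -/
noncomputable def dzeta (a b : ℕ) : ℝ :=
  ∑' n : ℕ, ∑ m ∈ Finset.Ioo 0 n, 1 / ((n : ℝ) ^ a * (m : ℝ) ^ b)

/-- Witten zeta function `W(r,s,t) = ∑_{n,m ≥ 1} 1/(n^r m^s (n+m)^t)`. -/
noncomputable def wzeta (r s t : ℕ) : ℝ :=
  ∑' n : ℕ+, ∑' m : ℕ+, 1 / ((n : ℝ) ^ r * (m : ℝ) ^ s * ((n : ℝ) + (m : ℝ)) ^ t)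

/-- Alternating double zeta value `ζ(a, b̄)`. -/
noncomputable def dzetaAB (a b : ℕ) : ℝ :=
  ∑' n : ℕ, ∑ m ∈ Finset.Ioo 0 n, (1 / (n : ℝ) ^ a) * ((-1 : ℝ) ^ (m - 1) / (m : ℝ) ^ b)

/-- Alternating double zeta value `ζ(ā, b)`. -/
noncomputable def dzetaBA (a b : ℕ) : ℝ :=
  ∑' n : ℕ, ∑ m ∈ Finset.Ioo 0 n, ((-1 : ℝ) ^ (n - 1) / (n : ℝ) ^ a) * (1 / (m : ℝ) ^ b)

/-- Doubly alternating double zeta value `ζ(ā, b̄)`. -/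
noncomputable def dzetaBB (a b : ℕ) : ℝ :=
  ∑' n : ℕ, ∑ m ∈ Finset.Ioo 0 n,
    ((-1 : ℝ) ^ (n - 1) / (n : ℝ) ^ a) * ((-1 : ℝ) ^ (m - 1) / (m : ℝ) ^ b)

/-- The `n`-th harmonic number `H_n = ∑_{k=1}^n 1/k` (with `H_0 = 0`). -/
noncomputable def H (n : ℕ) : ℝ := ∑ k ∈ Finset.Icc 1 n, 1 / (k : ℝ)

lemma H_eq_sum_range (n : ℕ) : H n = ∑ k ∈ Finset.range n, 1 / ((k : ℝ) + 1) := by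
  unfold H
  rw [Finset.range_eq_Ico]
  have h := Finset.sum_Ico_add' (fun k : ℕ => 1 / (k : ℝ)) 0 n 1
  push_cast at h
  rw [h]
  rfl

lemma H_succ (n : ℕ) : H (n + 1) = H n + 1 / ((n : ℝ) + 1) := by
  simp only [H_eq_sum_range, Finset.sum_range_succ]

lemma H_add (n k : ℕ) :
    H (n + k) = H n + ∑ i ∈ Finset.range k, 1 / ((n : ℝ) + i + 1) := by
  simp only [H_eq_sum_range, Finset.sum_range_add]
  push_cast
  rfl

lemma hasSum_congr_of_eq {f g : ℕ → ℝ} {u v : ℝ} (h : HasSum g v) (hfg : ∀ n, f n = g n)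
    (huv : u = v) : HasSum f u := by
  rwa [funext hfg, huv]

lemma hasSum_telescope (c : ℕ) :
    HasSum (fun m : ℕ => 1 / ((m : ℝ) + 1 + c) - 1 / ((m : ℝ) + 1 + (c + 1))) (1 / ((c : ℝ) + 1)) := by
  rw [hasSum_iff_tendsto_nat_of_nonneg]
  · have h (k : ℕ) : ∑ m ∈ Finset.range k, (1 / ((m : ℝ) + 1 + c) - 1 / ((m : ℝ) + 1 + (c + 1)))
        = 1 / ((c : ℝ) + 1) - 1 / (((k + c : ℕ) : ℝ) + 1) := by
      have := Finset.sum_range_sub' (fun m : ℕ => 1 / ((m : ℝ) + 1 + c)) k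
      simp only [Nat.cast_add, Nat.cast_one, Nat.cast_zero] at this
      convert this using 2 <;> push_cast <;> ring_nf
    simp only [h]
    have h2 := (Filter.tendsto_add_atTop_iff_nat c).2
      (tendsto_one_div_add_atTop_nhds_zero_nat (𝕜 := ℝ))
    simpa using h2.const_sub (1 / ((c : ℝ) + 1))
  · intro m
    rw [sub_nonneg]
    apply one_div_le_one_div_of_le <;> first | positivity | linarith

lemma hasSum_H (n : ℕ) :
    HasSum (fun m : ℕ => 1 / ((m : ℝ) + 1) - 1 / ((m : ℝ) + 1 + n)) (H n) := by
  induction n with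
  | zero => simp [H]
  | succ n ih =>
    rw [H_succ]
    convert ih.add (hasSum_telescope n) using 2 with m
    push_cast
    ring

/-- The part `1 / (n^(a+1) m N (N + n))` of the summand, for `n = i + 1`, `m = j + 1`, `N = n + m`. -/
noncomputable def termA (a : ℕ) (p : ℕ × ℕ) : ℝ :=
  1 / (((p.1 : ℝ) + 1) ^ (a + 1) * ((p.2 : ℝ) + 1) * ((p.1 : ℝ) + 1 + (p.2 + 1))
    * (2 * ((p.1 : ℝ) + 1) + (p.2 + 1)))

/-- The part `1 / (N^(a+2) m (N + n))` of the summand, for `n = i + 1`, `m = j + 1`, `N = n + m`. -/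
noncomputable def termB (a : ℕ) (p : ℕ × ℕ) : ℝ :=
  1 / (((p.1 : ℝ) + 1 + (p.2 + 1)) ^ (a + 2) * ((p.2 : ℝ) + 1)
    * (2 * ((p.1 : ℝ) + 1) + (p.2 + 1)))

/-- The summand `1 / (n^r m N^t)` of the Witten zeta value, for `n = i + 1`, `m = j + 1`. -/
noncomputable def termW (r t : ℕ) (p : ℕ × ℕ) : ℝ :=
  1 / (((p.1 : ℝ) + 1) ^ r * ((p.2 : ℝ) + 1) ^ 1 * ((p.1 : ℝ) + 1 + (p.2 + 1)) ^ t)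

lemma summable_of_dominated (D : ℕ × ℕ → ℝ)
    (h : ∀ p : ℕ × ℕ, ((p.1 : ℝ) + 1) ^ 2 * ((p.2 : ℝ) + 1) ^ 2 ≤ D p) :
    Summable (fun p => 1 / D p) := by
  have h1 : Summable (fun n : ℕ => 1 / ((n : ℝ) + 1) ^ 2) := by
    have := (summable_nat_add_iff 1).2 (Real.summable_one_div_nat_pow (p := 2) |>.2 (by norm_num))
    simpa using this
  have h2 := h1.mul_of_nonneg h1 (fun _ => by positivity) (fun _ => by positivity)
  refine Summable.of_nonneg_of_le (fun p => ?_) (fun p => ?_) h2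
  · exact one_div_nonneg.2 (le_trans (by positivity) (h p))
  · rw [one_div_mul_one_div]
    exact one_div_le_one_div_of_le (by positivity) (h p)

lemma summable_termW (r t : ℕ) (hr : 1 ≤ r) (ht : 2 ≤ t) : Summable (termW r t) := by
  refine summable_of_dominated _ fun p => ?_
  obtain ⟨i, j⟩ := p
  dsimp only
  have hi : (1 : ℝ) ≤ (i : ℝ) + 1 := by simp
  have hj : (1 : ℝ) ≤ (j : ℝ) + 1 := by simp
  generalize (i : ℝ) + 1 = x at *
  generalize (j : ℝ) + 1 = y at *
  have e1 : x ≤ x ^ r := le_self_pow₀ hi (by omega)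
  have e2 : (x + y) ^ 2 ≤ (x + y) ^ t := pow_le_pow_right₀ (by linarith) ht
  have e3 : x * y ≤ (x + y) ^ 2 := by nlinarith
  calc x ^ 2 * y ^ 2 = x * y ^ 1 * (x * y) := by ring
    _ ≤ x ^ r * y ^ 1 * (x + y) ^ t := by
      gcongr
      exact e3.trans e2

lemma summable_termA (a : ℕ) : Summable (termA a) := by
  refine summable_of_dominated _ fun p => ?_
  obtain ⟨i, j⟩ := p
  dsimp only
  have hi : (1 : ℝ) ≤ (i : ℝ) + 1 := by simp
  have hj : (1 : ℝ) ≤ (j : ℝ) + 1 := by simp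
  generalize (i : ℝ) + 1 = x at *
  generalize (j : ℝ) + 1 = y at *
  have e1 : x ≤ x ^ (a + 1) := le_self_pow₀ hi (by omega)
  calc x ^ 2 * y ^ 2 = x * y * x * y := by ring
    _ ≤ x ^ (a + 1) * y * (x + y) * (2 * x + y) := by
      gcongr <;> linarith

lemma summable_termB (a : ℕ) : Summable (termB a) := by
  refine summable_of_dominated _ fun p => ?_
  obtain ⟨i, j⟩ := p
  dsimp only
  have hi : (1 : ℝ) ≤ (i : ℝ) + 1 := by simp
  have hj : (1 : ℝ) ≤ (j : ℝ) + 1 := by simp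
  generalize (i : ℝ) + 1 = x at *
  generalize (j : ℝ) + 1 = y at *
  have e2 : (x + y) ^ 2 ≤ (x + y) ^ (a + 2) := pow_le_pow_right₀ (by linarith) (by omega)
  have e3 : x * y ≤ (x + y) ^ 2 := by nlinarith
  calc x ^ 2 * y ^ 2 = x * y * y * x := by ring
    _ ≤ (x + y) ^ (a + 2) * y * (2 * x + y) := by
      gcongr
      · exact e3.trans e2
      · linarith

lemma wzeta_eq_tsum (r t : ℕ) (hr : 1 ≤ r) (ht : 2 ≤ t) :
    wzeta r 1 t = ∑' p, termW r t p := by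
  rw [(summable_termW r t hr ht).tsum_prod]
  unfold wzeta
  rw [tsum_pnat_eq_tsum_succ (f := fun n : ℕ => ∑' m : ℕ+,
    1 / ((n : ℝ) ^ r * (m : ℝ) ^ 1 * ((n : ℝ) + (m : ℝ)) ^ t))]
  refine tsum_congr fun n => ?_
  rw [tsum_pnat_eq_tsum_succ (f := fun m : ℕ =>
    1 / (((n + 1 : ℕ) : ℝ) ^ r * (m : ℝ) ^ 1 * (((n + 1 : ℕ) : ℝ) + (m : ℝ)) ^ t))]
  refine tsum_congr fun m => ?_
  simp [termW]

/-- The finite geometric sum in `j`, for `x = n` and `y = m`, with `s = k + 1`. -/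
lemma geom_identity (x y : ℝ) (hx : 0 < x) (hy : 0 < y) (k : ℕ) :
    ∑ j ∈ Finset.Icc 2 (2 * (k + 1)), (-1 : ℝ) ^ j *
        (1 / (x ^ (2 * (k + 1) + 1 - j) * y ^ 1 * (x + y) ^ j))
      = 1 / (x ^ (2 * k + 1) * y * (x + y) * (2 * x + y))
        + 1 / ((x + y) ^ (2 * k + 2) * y * (2 * x + y)) := by
  induction k with
  | zero =>
    simp
    field_simp
    ring
  | succ k ih =>
    have hxy : 0 < x + y := by positivity
    have hsplit : ∑ j ∈ Finset.Icc 2 (2 * (k + 1)), (-1 : ℝ) ^ j *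
        (1 / (x ^ (2 * (k + 1 + 1) + 1 - j) * y ^ 1 * (x + y) ^ j))
        = (1 / x ^ 2) * ∑ j ∈ Finset.Icc 2 (2 * (k + 1)), (-1 : ℝ) ^ j *
        (1 / (x ^ (2 * (k + 1) + 1 - j) * y ^ 1 * (x + y) ^ j)) := by
      rw [Finset.mul_sum]
      refine Finset.sum_congr rfl fun j hj => ?_
      rw [Finset.mem_Icc] at hj
      have : 2 * (k + 1 + 1) + 1 - j = 2 * (k + 1) + 1 - j + 2 := by omega
      rw [this, pow_add]
      field_simp
    have e : 2 * (k + 1 + 1) = 2 * (k + 1) + 1 + 1 := by ring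
    rw [show Finset.Icc 2 (2 * (k + 1 + 1)) = Finset.Icc 2 (2 * (k + 1) + 1 + 1) by rw [e],
      Finset.sum_Icc_succ_top (by omega), Finset.sum_Icc_succ_top (by omega), hsplit, ih]
    have e1 : 2 * (k + 1 + 1) + 1 - (2 * (k + 1) + 1) = 2 := by omega
    have e2 : 2 * (k + 1 + 1) + 1 - (2 * (k + 1) + 1 + 1) = 1 := by omega
    have e3 : (-1 : ℝ) ^ (2 * (k + 1) + 1) = -1 := Odd.neg_one_pow ⟨k + 1, rfl⟩
    have e4 : (-1 : ℝ) ^ (2 * (k + 1) + 1 + 1) = 1 := by rw [pow_succ, e3]; norm_num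
    rw [e1, e2, e3, e4]
    have p1 : (x + y) ^ (2 * (k + 1) + 1 + 1) = (x + y) ^ (2 * k) * (x + y) ^ 4 := by ring
    have p2 : (x + y) ^ (2 * (k + 1) + 1) = (x + y) ^ (2 * k) * (x + y) ^ 3 := by ring
    have p4 : (x + y) ^ (2 * k + 2) = (x + y) ^ (2 * k) * (x + y) ^ 2 := by ring
    have q1 : x ^ (2 * (k + 1) + 1) = x ^ (2 * k) * x ^ 3 := by ring
    have q2 : x ^ (2 * k + 1) = x ^ (2 * k) * x := by ring
    simp only [p1, p2, p4, q1, q2]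
    have hX : 0 < x ^ (2 * k) := by positivity
    have hY : 0 < (x + y) ^ (2 * k) := by positivity
    generalize x ^ (2 * k) = X at *
    generalize (x + y) ^ (2 * k) = Y at *
    have h2 : 2 * x + y ≠ 0 := by positivity
    field_simp
    ring

lemma hasSum_termA (a n : ℕ) : HasSum (fun m : ℕ => termA a (n, m))
    (1 / ((n : ℝ) + 1) ^ (a + 3) * (H (n + 1) - H (2 * (n + 1)) / 2)) := by
  have h := (((hasSum_H (n + 1)).mul_left 2).sub (hasSum_H (2 * (n + 1)))).mul_left
    (1 / ((n : ℝ) + 1) ^ (a + 3) * (1 / 2))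
  have hv : 1 / ((n : ℝ) + 1) ^ (a + 3) * (H (n + 1) - H (2 * (n + 1)) / 2)
      = 1 / ((n : ℝ) + 1) ^ (a + 3) * (1 / 2) * (2 * H (n + 1) - H (2 * (n + 1))) := by ring
  rw [hv]
  refine hasSum_congr_of_eq h (fun m => ?_) rfl
  simp only [termA]
  push_cast
  have hn : (0 : ℝ) < (n : ℝ) + 1 := by positivity
  have hm : (0 : ℝ) < (m : ℝ) + 1 := by positivity
  generalize (n : ℝ) + 1 = x at *
  generalize (m : ℝ) + 1 = y at *
  have h2 : 2 * x + y ≠ 0 := by positivity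
  have h3 : y + 2 * x ≠ 0 := by positivity
  have h4 : x + y ≠ 0 := by positivity
  have h5 : y + x ≠ 0 := by positivity
  field_simp
  ring

lemma sum_termB (a k : ℕ) : ∑ p ∈ Finset.HasAntidiagonal.antidiagonal k, termB a p
    = 1 / ((k : ℝ) + 2) ^ (a + 3) * (H (2 * (k + 2)) / 2 - 3 / (4 * ((k : ℝ) + 2))) := by
  have h1 : ∑ p ∈ Finset.HasAntidiagonal.antidiagonal k, 1 / ((p.2 : ℝ) + 1) = H (k + 1) := by
    rw [Finset.Nat.sum_antidiagonal_eq_sum_range_succ_mk, H_eq_sum_range]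
    exact Finset.sum_range_reflect (fun j : ℕ => 1 / ((j : ℝ) + 1)) (k + 1)
  have h2 : ∑ p ∈ Finset.HasAntidiagonal.antidiagonal k, 1 / (((k + 2 : ℕ) : ℝ) + p.1 + 1)
      = H (k + 2 + (k + 1)) - H (k + 2) := by
    rw [Finset.Nat.sum_antidiagonal_eq_sum_range_succ_mk, H_add]
    simp
  have h3 : H (2 * (k + 2)) = H (k + 2 + (k + 1)) + 1 / (2 * ((k : ℝ) + 2)) := by
    rw [show 2 * (k + 2) = k + 2 + (k + 1) + 1 by ring, H_succ]
    push_cast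
    ring
  have h4 : H (k + 2) = H (k + 1) + 1 / ((k : ℝ) + 2) := by
    rw [H_succ (k + 1)]
    push_cast
    ring
  have h5 : ∑ p ∈ Finset.HasAntidiagonal.antidiagonal k, termB a p = 1 / ((k : ℝ) + 2) ^ (a + 3) * (1 / 2) *
      ∑ p ∈ Finset.HasAntidiagonal.antidiagonal k,
        (1 / ((p.2 : ℝ) + 1) + 1 / (((k + 2 : ℕ) : ℝ) + p.1 + 1)) := by
    rw [Finset.mul_sum]
    refine Finset.sum_congr rfl fun p hp => ?_
    obtain ⟨i, j⟩ := p
    rw [Finset.HasAntidiagonal.mem_antidiagonal] at hp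
    subst hp
    simp only [termB]
    push_cast
    have e1 : (i : ℝ) + 1 + (j + 1) = i + j + 2 := by ring
    have e2 : 2 * ((i : ℝ) + 1) + (j + 1) = i + j + 2 + i + 1 := by ring
    rw [e1, e2]
    have e3 : (i : ℝ) + j + 2 ≠ 0 := by positivity
    have e4 : (i : ℝ) + j + 2 + i + 1 ≠ 0 := by positivity
    field_simp
    ring
  rw [h5, Finset.sum_add_distrib, h1, h2, h3, h4]
  have : (k : ℝ) + 2 ≠ 0 := by positivity
  field_simp
  ring

lemma hasSum_B (a : ℕ) : HasSum (fun k : ℕ => 1 / ((k : ℝ) + 1) ^ (a + 3) *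
    (H (2 * (k + 1)) / 2 - 3 / (4 * ((k : ℝ) + 1)))) (∑' p, termB a p) := by
  have h := (Finset.HasAntidiagonal.sigmaAntidiagonalEquivProd (A := ℕ)).hasSum_iff.2 (summable_termB a).hasSum
  have h2 := h.sigma (g := fun k : ℕ => 1 / ((k : ℝ) + 2) ^ (a + 3) *
      (H (2 * (k + 2)) / 2 - 3 / (4 * ((k : ℝ) + 2)))) fun k => by
    rw [← sum_termB, ← Finset.sum_coe_sort]
    exact hasSum_fintype _
  -- The summand with `N = 1` vanishes because `H 2 = 3 / 2`.
  rw [← hasSum_nat_add_iff' 1]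
  refine hasSum_congr_of_eq h2 (fun k => ?_) ?_
  · push_cast
    simp only [add_assoc]
    norm_num
  · simp [H_succ, show H 0 = 0 by simp [H]]
    norm_num

theorem stmt8 (s : ℕ) (hs : 1 ≤ s) :
    ∑ j ∈ Finset.Icc 2 (2 * s), (-1 : ℝ) ^ j * wzeta (2 * s + 1 - j) 1 j
      = dzeta (2 * s + 1) 1 + (1 / 4) * rzeta (2 * s + 2) := by
  obtain ⟨k, rfl⟩ : ∃ k, s = k + 1 := ⟨s - 1, by omega⟩
  have hsum (j) (hj : j ∈ Finset.Icc 2 (2 * (k + 1))) :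
      HasSum (fun p => (-1 : ℝ) ^ j * termW (2 * (k + 1) + 1 - j) j p)
        ((-1 : ℝ) ^ j * wzeta (2 * (k + 1) + 1 - j) 1 j) := by
    rw [Finset.mem_Icc] at hj
    rw [wzeta_eq_tsum _ _ (by omega) hj.1]
    exact (summable_termW _ _ (by omega) hj.1).hasSum.mul_left _
  have hL := hasSum_sum hsum
  have hAB : HasSum (fun p => termA (2 * k) p + termB (2 * k) p)
      (∑' p, termA (2 * k) p + ∑' p, termB (2 * k) p) :=
    (summable_termA _).hasSum.add (summable_termB _).hasSum
  have hfun : (fun p => ∑ j ∈ Finset.Icc 2 (2 * (k + 1)),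
      (-1 : ℝ) ^ j * termW (2 * (k + 1) + 1 - j) j p)
      = fun p => termA (2 * k) p + termB (2 * k) p := by
    ext p
    exact geom_identity ((p.1 : ℝ) + 1) ((p.2 : ℝ) + 1) (by positivity) (by positivity) k
  rw [hfun] at hL
  rw [hL.unique hAB]
  have hA := (summable_termA (2 * k)).hasSum.prod_fiberwise (hasSum_termA (2 * k))
  have hT := hA.add (hasSum_B (2 * k))
  have hz : HasSum (fun n : ℕ => 1 / (n : ℝ) ^ (2 * (k + 1) + 2)) (rzeta (2 * (k + 1) + 2)) :=
    (Real.summable_one_div_nat_pow.2 (by omega)).hasSum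
  have hz1 := ((hasSum_nat_add_iff' 1).2 hz).mul_left (1 / 4)
  have hD := hT.sub hz1
  have hd : HasSum (fun n : ℕ => ∑ m ∈ Finset.Ioo 0 n,
      1 / ((n : ℝ) ^ (2 * (k + 1) + 1) * (m : ℝ) ^ 1))
      (∑' p, termA (2 * k) p + ∑' p, termB (2 * k) p
        - 1 / 4 * rzeta (2 * (k + 1) + 2)) := by
    rw [← hasSum_nat_add_iff' 1]
    convert hD using 1
    · ext n
      have e : ∑ m ∈ Finset.Ioo 0 (n + 1),
          1 / (((n + 1 : ℕ) : ℝ) ^ (2 * (k + 1) + 1) * (m : ℝ) ^ 1)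
          = 1 / ((n : ℝ) + 1) ^ (2 * k + 3) * H n := by
        have hI : Finset.Ioo 0 (n + 1) = Finset.Icc 1 n := by
          ext m
          simp only [Finset.mem_Ioo, Finset.mem_Icc]
          omega
        rw [hI, H, Finset.mul_sum]
        refine Finset.sum_congr rfl fun m _ => ?_
        rw [one_div_mul_one_div]
        push_cast
        ring
      rw [e, H_succ n]
      have e2 : 2 * (k + 1) + 2 = 2 * k + 3 + 1 := by ring
      rw [e2, pow_succ _ (2 * k + 3)]
      push_cast
      have : (n : ℝ) + 1 ≠ 0 := by positivity
      field_simp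
      ring
    · simp
  have : dzeta (2 * (k + 1) + 1) 1 = _ := hd.tsum_eq
  rw [this]
  ring
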